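/- arXiv:1909.04881 — 6 statements merged into one kernel-verified Lean document; each statement's English description precedes it below -/
import Mathlib

section
/- For all APGs G₁ and G₂, the APG G₁ × G₂ defined by (G₁ × G₂)(𝓛) := G₁(𝓛) × G₂(𝓛), (G₁ × G₂)(𝓔) := G₁(𝓔) × G₂(𝓔), (G₁ × G₂)(λ)(e₁, e₂) := (G₁(λ)(e₁), G₂(λ)(e₂)), (G₁ × G₂)(σ)(l₁, l₂) := ⋄_{l ↦ Lbl(l, l₂)}(G₁(σ)(l₁)) × ⋄_{l ↦ Lbl(l₁, l)}(G₂(σ)(l₂)), and (G₁ × G₂)(υ)(e₁, e₂) := (⋄^{e ↦ Id(e, e₂)}_{l ↦ Lbl(l, G₂(λ)(e₂))}(G₁(υ)(e₁)), ⋄^{e ↦ Id(e₁, e)}_{l ↦ Lbl(G₁(λ)(e₁), l)}(G₂(υ)(e₂))), together with the projection morphisms given componentwise by the set-theoretic projections, is a product of G₁ and G₂ in the category APG: for every APG G and morphisms p : G → G₁ and q : G → G₂ there is a unique morphism (p, q) : G → G₁ × G₂ whose composites with the projections are p and q respectively. -/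
/-- Types over a set `P` of primitive types and a set `L` of labels. -/
inductive Ty (P : Type) (L : Type) : Type
  | zero : Ty P L
  | one : Ty P L
  | sum : Ty P L → Ty P L → Ty P L
  | prod : Ty P L → Ty P L → Ty P L
  | prim : P → Ty P L
  | lbl : L → Ty P L

/-- Values over `(L, E, lab)`, intrinsically typed. -/
inductive Val (P : Type) (V : P → Type) (L : Type) (E : Type) (lab : E → L) :
    Ty P L → Type
  | unit : Val P V L E lab .one
  | inl {t₁ t₂ : Ty P L} : Val P V L E lab t₁ → Val P V L E lab (.sum t₁ t₂)
  | inr {t₁ t₂ : Ty P L} : Val P V L E lab t₂ → Val P V L E lab (.sum t₁ t₂)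
  | pair {t₁ t₂ : Ty P L} : Val P V L E lab t₁ → Val P V L E lab t₂ →
      Val P V L E lab (.prod t₁ t₂)
  | prim (p : P) : V p → Val P V L E lab (.prim p)
  | id (e : E) : Val P V L E lab (.lbl (lab e))

/-- The set `G(𝓥)` of all values: a value paired with its type.
The typing function `τ` is `Sigma.fst`. -/
def VSig (P : Type) (V : P → Type) (L : Type) (E : Type) (lab : E → L) : Type :=
  Σ t : Ty P L, Val P V L E lab t

/-- An algebraic property graph over primitives `P` with primitive values `V`. -/
structure APG (P : Type) (V : P → Type) : Type 1 where
  L : Type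
  E : Type
  lab : E → L
  sch : L → Ty P L
  val : E → VSig P V L E lab
  coh : ∀ e, (val e).1 = sch (lab e)

/-- A morphism of APGs: label and element functions commuting with labeling. -/
@[ext]
structure APG.Hom {P : Type} {V : P → Type} (G₁ G₂ : APG P V) : Type where
  fL : G₁.L → G₂.L
  fE : G₁.E → G₂.E
  nat : ∀ e, fL (G₁.lab e) = G₂.lab (fE e)

/-- The identity APG morphism: the pair of identity functions. -/
def APG.Hom.idHom {P : Type} {V : P → Type} (G : APG P V) : APG.Hom G G :=
  ⟨fun l => l, fun e => e, fun _ => rfl⟩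

/-- Composition of APG morphisms: componentwise composition. -/
def APG.Hom.comp {P : Type} {V : P → Type} {G₁ G₂ G₃ : APG P V}
    (f : APG.Hom G₁ G₂) (g : APG.Hom G₂ G₃) : APG.Hom G₁ G₃ :=
  ⟨g.fL ∘ f.fL, g.fE ∘ f.fE, fun e => by
    simp only [Function.comp_apply]; rw [f.nat, g.nat]⟩

/-- `⋄_f`: transport of types along a function `f` from labels to types:
it replaces each `Lbl l` by `f l`, fixes `0`, `1` and `Prim p`, and commutes
with `+` and `×`. -/
def Ty.transport {P : Type} {L₁ L₂ : Type} (f : L₁ → Ty P L₂) : Ty P L₁ → Ty P L₂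
  | .zero => .zero
  | .one => .one
  | .sum t₁ t₂ => .sum (t₁.transport f) (t₂.transport f)
  | .prod t₁ t₂ => .prod (t₁.transport f) (t₂.transport f)
  | .prim p => .prim p
  | .lbl l => f l

/-- `⋄^g_f`: transport of values along `f` (on labels) and `g` (on elements):
it replaces each `Id e` by `g e`, fixes `()` and `Prim d`, and commutes with
`inl`, `inr` and pairing. -/
def Val.transport {P : Type} {V : P → Type} {L₁ E₁ : Type} {lab₁ : E₁ → L₁}
    {L₂ E₂ : Type} {lab₂ : E₂ → L₂}
    (f : L₁ → Ty P L₂) (g : (e : E₁) → Val P V L₂ E₂ lab₂ (f (lab₁ e))) :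
    {t : Ty P L₁} → Val P V L₁ E₁ lab₁ t → Val P V L₂ E₂ lab₂ (t.transport f)
  | _, .unit => .unit
  | _, .inl v => .inl (v.transport f g)
  | _, .inr v => .inr (v.transport f g)
  | _, .pair v₁ v₂ => .pair (v₁.transport f g) (v₂.transport f g)
  | _, .prim p d => .prim p d
  | _, .id e => g e

/-- `⋄^g_f` on typed values (elements of `G(𝓥)`). -/
def VSig.transport {P : Type} {V : P → Type} {L₁ E₁ : Type} {lab₁ : E₁ → L₁}
    {L₂ E₂ : Type} {lab₂ : E₂ → L₂}
    (f : L₁ → Ty P L₂) (g : (e : E₁) → Val P V L₂ E₂ lab₂ (f (lab₁ e)))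
    (v : VSig P V L₁ E₁ lab₁) : VSig P V L₂ E₂ lab₂ :=
  ⟨v.1.transport f, v.2.transport f g⟩

variable {P : Type} {V : P → Type}

/-- Labeling function of the product APG. -/
def APG.prodLab (G₁ G₂ : APG P V) : G₁.E × G₂.E → G₁.L × G₂.L :=
  fun e => (G₁.lab e.1, G₂.lab e.2)

/-- The product APG `G₁ × G₂`. -/
def APG.prod (G₁ G₂ : APG P V) : APG P V where
  L := G₁.L × G₂.L
  E := G₁.E × G₂.E
  lab := APG.prodLab G₁ G₂
  sch := fun l =>
    Ty.prod ((G₁.sch l.1).transport fun a => Ty.lbl (a, l.2))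
            ((G₂.sch l.2).transport fun b => Ty.lbl (l.1, b))
  val := fun e =>
    ⟨Ty.prod ((G₁.val e.1).1.transport fun a => Ty.lbl (a, G₂.lab e.2))
             ((G₂.val e.2).1.transport fun b => Ty.lbl (G₁.lab e.1, b)),
     Val.pair
       (Val.transport (lab₁ := G₁.lab) (lab₂ := APG.prodLab G₁ G₂)
         (fun a => Ty.lbl (a, G₂.lab e.2)) (fun a => Val.id (a, e.2)) (G₁.val e.1).2)
       (Val.transport (lab₁ := G₂.lab) (lab₂ := APG.prodLab G₁ G₂)
         (fun b => Ty.lbl (G₁.lab e.1, b)) (fun b => Val.id (e.1, b)) (G₂.val e.2).2)⟩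
  coh := fun e => by
    dsimp [APG.prodLab]
    rw [G₁.coh, G₂.coh]

/-- First projection morphism of the product APG. -/
def APG.prodFst (G₁ G₂ : APG P V) : APG.Hom (APG.prod G₁ G₂) G₁ :=
  ⟨Prod.fst, Prod.fst, fun _ => rfl⟩

/-- Second projection morphism of the product APG. -/
def APG.prodSnd (G₁ G₂ : APG P V) : APG.Hom (APG.prod G₁ G₂) G₂ :=
  ⟨Prod.snd, Prod.snd, fun _ => rfl⟩

namespace APG

variable {G G₁ G₂ : APG P V}

/-- The pairing `(p, q) : G → G₁ × G₂` of two morphisms with common domain. An APG morphism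
need only commute with the labeling, so no condition on schemas or values has to be checked. -/
def prodLift (p : Hom G G₁) (q : Hom G G₂) : Hom G (G₁.prod G₂) where
  fL l := (p.fL l, q.fL l)
  fE e := (p.fE e, q.fE e)
  nat e := Prod.ext (p.nat e) (q.nat e)

theorem prodLift_comp_prodFst (p : Hom G G₁) (q : Hom G G₂) :
    (prodLift p q).comp (prodFst G₁ G₂) = p :=
  rfl

theorem prodLift_comp_prodSnd (p : Hom G G₁) (q : Hom G G₂) :
    (prodLift p q).comp (prodSnd G₁ G₂) = q :=
  rfl

theorem prod_hom_ext {m m' : Hom G (G₁.prod G₂)}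
    (hfst : m.comp (prodFst G₁ G₂) = m'.comp (prodFst G₁ G₂))
    (hsnd : m.comp (prodSnd G₁ G₂) = m'.comp (prodSnd G₁ G₂)) : m = m' := by
  ext x : 2
  · exact Prod.ext (congrFun (congrArg Hom.fL hfst) x) (congrFun (congrArg Hom.fL hsnd) x)
  · exact Prod.ext (congrFun (congrArg Hom.fE hfst) x) (congrFun (congrArg Hom.fE hsnd) x)

end APG

/-- `G₁ × G₂`, with the set-theoretic projections, is a product
of `G₁` and `G₂` in the category `APG`: for every APG `G` and morphisms
`p : G → G₁`, `q : G → G₂` there is a unique morphism `G → G₁ × G₂` whose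
composites with the projections are `p` and `q`. -/
theorem apg_prod_is_product (P : Type) (V : P → Type) (G₁ G₂ : APG P V)
    (G : APG P V) (p : APG.Hom G G₁) (q : APG.Hom G G₂) :
    ∃ m : APG.Hom G (APG.prod G₁ G₂),
      (m.comp (APG.prodFst G₁ G₂) = p ∧ m.comp (APG.prodSnd G₁ G₂) = q) ∧
      ∀ m' : APG.Hom G (APG.prod G₁ G₂),
        (m'.comp (APG.prodFst G₁ G₂) = p ∧ m'.comp (APG.prodSnd G₁ G₂) = q) →
        m' = m := by
  refine ⟨APG.prodLift p q,
    ⟨APG.prodLift_comp_prodFst p q, APG.prodLift_comp_prodSnd p q⟩, ?_⟩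
  rintro m' ⟨hfst, hsnd⟩
  exact APG.prod_hom_ext
    (hfst.trans (APG.prodLift_comp_prodFst p q).symm)
    (hsnd.trans (APG.prodLift_comp_prodSnd p q).symm)
end

section
/- For all APGs G₁ and G₂, the APG G₁ + G₂ defined by (G₁ + G₂)(𝓛) := G₁(𝓛) + G₂(𝓛) (disjoint union), (G₁ + G₂)(𝓔) := G₁(𝓔) + G₂(𝓔), (G₁ + G₂)(λ) := G₁(λ) + G₂(λ), (G₁ + G₂)(σ) acting on inl(l) as ⋄_{inl}(G₁(σ)(l)) and on inr(l) as ⋄_{inr}(G₂(σ)(l)) (transporting labels along the coproduct injections), and (G₁ + G₂)(υ) acting on inl(e) as ⋄^{inl}_{inl}(G₁(υ)(e)) and on inr(e) as ⋄^{inr}_{inr}(G₂(υ)(e)), together with the injection morphisms given componentwise by the set-theoretic injections, is a coproduct of G₁ and G₂ in the category APG: for every APG G and morphisms p : G₁ → G and q : G₂ → G there is a unique morphism (p | q) : G₁ + G₂ → G whose composites with the injections are p and q respectively. -/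
variable {P : Type} {V : P → Type}

/-- Labeling function of the coproduct APG. -/
def APG.coprodLab (G₁ G₂ : APG P V) : G₁.E ⊕ G₂.E → G₁.L ⊕ G₂.L :=
  Sum.map G₁.lab G₂.lab

/-- The coproduct APG `G₁ + G₂`: disjoint unions of labels and elements, with
schemas and values transported along the coproduct injections. -/
def APG.coprod (G₁ G₂ : APG P V) : APG P V where
  L := G₁.L ⊕ G₂.L
  E := G₁.E ⊕ G₂.E
  lab := APG.coprodLab G₁ G₂
  sch := Sum.elim (fun l => (G₁.sch l).transport fun a => Ty.lbl (Sum.inl a))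
                  (fun l => (G₂.sch l).transport fun b => Ty.lbl (Sum.inr b))
  val := fun e =>
    match e with
    | Sum.inl e =>
        ⟨(G₁.val e).1.transport fun a => Ty.lbl (Sum.inl a),
         Val.transport (lab₁ := G₁.lab) (lab₂ := APG.coprodLab G₁ G₂)
           (fun a => Ty.lbl (Sum.inl a)) (fun a => Val.id (Sum.inl a)) (G₁.val e).2⟩
    | Sum.inr e =>
        ⟨(G₂.val e).1.transport fun b => Ty.lbl (Sum.inr b),
         Val.transport (lab₁ := G₂.lab) (lab₂ := APG.coprodLab G₁ G₂)
           (fun b => Ty.lbl (Sum.inr b)) (fun b => Val.id (Sum.inr b)) (G₂.val e).2⟩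
  coh := fun e => by
    cases e with
    | inl e => dsimp [APG.coprodLab]; rw [G₁.coh]
    | inr e => dsimp [APG.coprodLab]; rw [G₂.coh]

/-- First injection morphism into the coproduct APG. -/
def APG.coprodInl (G₁ G₂ : APG P V) : APG.Hom G₁ (APG.coprod G₁ G₂) :=
  ⟨Sum.inl, Sum.inl, fun _ => rfl⟩

/-- Second injection morphism into the coproduct APG. -/
def APG.coprodInr (G₁ G₂ : APG P V) : APG.Hom G₂ (APG.coprod G₁ G₂) :=
  ⟨Sum.inr, Sum.inr, fun _ => rfl⟩

section Copairing

variable {G₁ G₂ G : APG P V}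

/-- The copairing `(p | q) : G₁ + G₂ → G`. As a morphism of APGs is constrained only by the
labelings, the copairings of the label and element functions already form a morphism. -/
def APG.coprodDesc (p : APG.Hom G₁ G) (q : APG.Hom G₂ G) : APG.Hom (APG.coprod G₁ G₂) G where
  fL := Sum.elim p.fL q.fL
  fE := Sum.elim p.fE q.fE
  nat
    | .inl e => p.nat e
    | .inr e => q.nat e

theorem APG.coprodInl_comp_coprodDesc (p : APG.Hom G₁ G) (q : APG.Hom G₂ G) :
    (APG.coprodInl G₁ G₂).comp (APG.coprodDesc p q) = p :=
  APG.Hom.ext (Sum.elim_comp_inl p.fL q.fL) (Sum.elim_comp_inl p.fE q.fE)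

theorem APG.coprodInr_comp_coprodDesc (p : APG.Hom G₁ G) (q : APG.Hom G₂ G) :
    (APG.coprodInr G₁ G₂).comp (APG.coprodDesc p q) = q :=
  APG.Hom.ext (Sum.elim_comp_inr p.fL q.fL) (Sum.elim_comp_inr p.fE q.fE)

theorem APG.coprod_hom_ext {m m' : APG.Hom (APG.coprod G₁ G₂) G}
    (hl : (APG.coprodInl G₁ G₂).comp m = (APG.coprodInl G₁ G₂).comp m')
    (hr : (APG.coprodInr G₁ G₂).comp m = (APG.coprodInr G₁ G₂).comp m') : m = m' := by
  obtain ⟨hlL, hlE⟩ := APG.Hom.ext_iff.mp hl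
  obtain ⟨hrL, hrE⟩ := APG.Hom.ext_iff.mp hr
  exact APG.Hom.ext (funext (Sum.rec (congrFun hlL) (congrFun hrL)))
    (funext (Sum.rec (congrFun hlE) (congrFun hrE)))

end Copairing

/-- `G₁ + G₂`, with the set-theoretic injections, is a coproduct
of `G₁` and `G₂` in the category `APG`: for every APG `G` and morphisms
`p : G₁ → G`, `q : G₂ → G` there is a unique morphism `G₁ + G₂ → G` whose
composites with the injections are `p` and `q`. -/
theorem apg_coprod_is_coproduct (P : Type) (V : P → Type) (G₁ G₂ : APG P V)
    (G : APG P V) (p : APG.Hom G₁ G) (q : APG.Hom G₂ G) :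
    ∃ m : APG.Hom (APG.coprod G₁ G₂) G,
      ((APG.coprodInl G₁ G₂).comp m = p ∧ (APG.coprodInr G₁ G₂).comp m = q) ∧
      ∀ m' : APG.Hom (APG.coprod G₁ G₂) G,
        ((APG.coprodInl G₁ G₂).comp m' = p ∧ (APG.coprodInr G₁ G₂).comp m' = q) →
        m' = m := by
  have hl := APG.coprodInl_comp_coprodDesc p q
  have hr := APG.coprodInr_comp_coprodDesc p q
  refine ⟨APG.coprodDesc p q, ⟨hl, hr⟩, ?_⟩
  rintro m' ⟨hl', hr'⟩
  exact APG.coprod_hom_ext (hl'.trans hl.symm) (hr'.trans hr.symm)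
end

section
/- The category APG has pullbacks of all cospans; consequently, since APG also has a terminal object, binary products, and equalizers, APG has all finite limits. -/
open CategoryTheory

/-- The category `APG` of algebraic property graphs: morphisms are APG
morphisms, identities are pairs of identity functions, and composition is
componentwise. -/
instance APG.category (P : Type) (V : P → Type) : Category (APG P V) where
  Hom := APG.Hom
  id := APG.Hom.idHom
  comp := APG.Hom.comp
  id_comp := fun _ => rfl
  comp_id := fun _ => rfl
  assoc := fun _ _ _ => rfl

/-! A morphism of algebraic property graphs is a commutative square between labeling functions: it
is not required to respect schemas or values. Every function `E → L` is moreover the labeling of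
some graph, since each label can be given the type `1` and each element the value `()`. Hence `APG`
is equivalent to the arrow category of sets, where limits are computed on sources and targets. -/

namespace APG

variable (P : Type) (V : P → Type)

/-- The functor sending an algebraic property graph to its labeling function, forgetting schema and
values; it is the comparison of `APG` with the arrow category of sets. -/
def labeling : APG P V ⥤ Arrow Type where
  obj G := Arrow.mk (↾G.lab)
  map h := Arrow.homMk' (↾(Hom.fE h)) (↾(Hom.fL h)) <| by
    ext e
    exact (Hom.nat h e).symm

/-- Full faithfulness of `labeling`: the two legs of a commutative square of labeling functions are
the element and label components of a morphism. -/
def fullyFaithfulLabeling : (labeling P V).FullyFaithful where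
  preimage sq := Hom.mk (sq.right : _ → _) (sq.left : _ → _) fun e =>
    (ConcreteCategory.congr_hom sq.w e).symm
  map_preimage _ := rfl
  preimage_map _ := rfl

instance : (labeling P V).Full := (fullyFaithfulLabeling P V).full

instance : (labeling P V).Faithful := (fullyFaithfulLabeling P V).faithful

/-- The algebraic property graph with a given labeling function in which every label has type `1`
and every element has value `()`. -/
def ofLabeling {E L : Type} (lab : E → L) : APG P V where
  L := L
  E := E
  lab := lab
  sch _ := .one
  val _ := ⟨.one, .unit⟩
  coh _ := rfl

instance : (labeling P V).EssSurj where
  mem_essImage f := ⟨ofLabeling P V (f.hom : _ → _), ⟨Iso.refl f⟩⟩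

instance : (labeling P V).IsEquivalence where

end APG

theorem apg_has_pullbacks_and_finite_limits_general (P : Type) (V : P → Type) :
    Limits.HasLimits (APG P V) :=
  Adjunction.has_limits_of_equivalence (APG.labeling P V)

/-- The category `APG` has pullbacks of all cospans;
consequently (having also a terminal object, binary products and equalizers)
it has all finite limits. -/
theorem apg_has_pullbacks_and_finite_limits (P : Type) (V : P → Type) :
    Limits.HasPullbacks (APG P V) ∧ Limits.HasFiniteLimits (APG P V) := by
  have := apg_has_pullbacks_and_finite_limits_general P V
  exact ⟨inferInstance, inferInstance⟩
end

section
/- There exist APGs G₁ and G₂ and an APG morphism h : G₁ → G₂ that does not underlie any natural transformation: take G₁(𝓛) = G₂(𝓛) = {l} with G₁(σ)(l) = 1 and G₂(σ)(l) = 0, take G₁(𝓔) = G₂(𝓔) = ∅, and take h = (id, id_∅); then no choice of functions h_𝓣 : G₁(𝓣) → G₂(𝓣) and h_𝓥 : G₁(𝓥) → G₂(𝓥) satisfies both the σ-naturality equation h_𝓣 ∘ G₁(σ) = G₂(σ) ∘ h_𝓛 and the τ-naturality equation h_𝓣 ∘ G₁(τ) = G₂(τ) ∘ h_𝓥, because these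 would force the existence of a value of type 0 in G₂(𝓥), and no value has type 0. Hence the morphisms of APG-NT form a proper subset of the morphisms of APG. -/
/-- A natural transformation between APGs (viewed as functors `CD → Set`):
components on types, values, labels and elements, natural with respect to
`λ`, `σ`, `υ` and `τ`. -/
@[ext]
structure APG.NT {P : Type} {V : P → Type} (G₁ G₂ : APG P V) : Type where
  hT : Ty P G₁.L → Ty P G₂.L
  hV : VSig P V G₁.L G₁.E G₁.lab → VSig P V G₂.L G₂.E G₂.lab
  fL : G₁.L → G₂.L
  fE : G₁.E → G₂.E
  nat_lab : ∀ e, fL (G₁.lab e) = G₂.lab (fE e)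
  nat_sch : ∀ l, hT (G₁.sch l) = G₂.sch (fL l)
  nat_val : ∀ e, hV (G₁.val e) = G₂.val (fE e)
  nat_ty : ∀ v, hT v.1 = (hV v).1

/-- The identity natural transformation. -/
def APG.NT.idNT {P : Type} {V : P → Type} (G : APG P V) : APG.NT G G :=
  ⟨fun t => t, fun v => v, fun l => l, fun e => e,
   fun _ => rfl, fun _ => rfl, fun _ => rfl, fun _ => rfl⟩

/-- Componentwise composition of natural transformations. -/
def APG.NT.comp {P : Type} {V : P → Type} {G₁ G₂ G₃ : APG P V}
    (f : APG.NT G₁ G₂) (g : APG.NT G₂ G₃) : APG.NT G₁ G₃ where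
  hT := g.hT ∘ f.hT
  hV := g.hV ∘ f.hV
  fL := g.fL ∘ f.fL
  fE := g.fE ∘ f.fE
  nat_lab := fun e => by simp only [Function.comp_apply]; rw [f.nat_lab, g.nat_lab]
  nat_sch := fun l => by simp only [Function.comp_apply]; rw [f.nat_sch, g.nat_sch]
  nat_val := fun e => by simp only [Function.comp_apply]; rw [f.nat_val, g.nat_val]
  nat_ty := fun v => by simp only [Function.comp_apply]; rw [f.nat_ty, g.nat_ty]

/-- The APG with one label `l`, no elements, and schema `σ(l) = 1`. -/
def APG.exOne (P : Type) (V : P → Type) : APG P V where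
  L := PUnit
  E := PEmpty
  lab := PEmpty.elim
  sch := fun _ => Ty.one
  val := PEmpty.elim
  coh := fun e => e.elim

/-- The APG with one label `l`, no elements, and schema `σ(l) = 0`. -/
def APG.exZero (P : Type) (V : P → Type) : APG P V where
  L := PUnit
  E := PEmpty
  lab := PEmpty.elim
  sch := fun _ => Ty.zero
  val := PEmpty.elim
  coh := fun e => e.elim

/-- The identity-pair APG morphism from `exOne` to `exZero`. -/
def APG.exHom (P : Type) (V : P → Type) : APG.Hom (APG.exOne P V) (APG.exZero P V) :=
  ⟨fun l => l, fun e => e, fun e => e.elim⟩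

instance Val.isEmpty_zero {P : Type} {V : P → Type} {L E : Type} {lab : E → L} :
    IsEmpty (Val P V L E lab .zero) :=
  ⟨nofun⟩

theorem VSig.nonempty_val_of_type_natural {P : Type} {V : P → Type} {L₁ E₁ L₂ E₂ : Type}
    {lab₁ : E₁ → L₁} {lab₂ : E₂ → L₂} {hT : Ty P L₁ → Ty P L₂}
    {hV : VSig P V L₁ E₁ lab₁ → VSig P V L₂ E₂ lab₂} (hτ : ∀ v, hT v.1 = (hV v).1)
    {t : Ty P L₁} (v : Val P V L₁ E₁ lab₁ t) : Nonempty (Val P V L₂ E₂ lab₂ (hT t)) := by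
  rw [hτ ⟨t, v⟩]
  exact ⟨(hV ⟨t, v⟩).2⟩

namespace APG

variable {P : Type} {V : P → Type}

theorem not_exists_natural_of_isEmpty_val {G₁ G₂ : APG P V} {fL : G₁.L → G₂.L} {l : G₁.L}
    (v : Val P V G₁.L G₁.E G₁.lab (G₁.sch l))
    (hempty : IsEmpty (Val P V G₂.L G₂.E G₂.lab (G₂.sch (fL l)))) :
    ¬ ∃ (hT : Ty P G₁.L → Ty P G₂.L)
        (hV : VSig P V G₁.L G₁.E G₁.lab → VSig P V G₂.L G₂.E G₂.lab),
        (∀ l, hT (G₁.sch l) = G₂.sch (fL l)) ∧ (∀ v, hT v.1 = (hV v).1) := by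
  rintro ⟨hT, hV, hσ, hτ⟩
  obtain ⟨w⟩ := VSig.nonempty_val_of_type_natural hτ v
  rw [hσ l] at w
  exact hempty.false w

theorem isEmpty_nt_of_isEmpty_val {G₁ G₂ : APG P V} {l : G₁.L}
    (v : Val P V G₁.L G₁.E G₁.lab (G₁.sch l))
    (hempty : ∀ l, IsEmpty (Val P V G₂.L G₂.E G₂.lab (G₂.sch l))) : IsEmpty (NT G₁ G₂) :=
  ⟨fun h => not_exists_natural_of_isEmpty_val v (hempty (h.fL l))
    ⟨h.hT, h.hV, h.nat_sch, h.nat_ty⟩⟩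

end APG

/-- The APG morphism `exHom : exOne → exZero` underlies no
natural transformation: no choice of type and value components satisfies both
the `σ`-naturality and `τ`-naturality equations (they would force a value of
type `0`).  Hence the morphisms of `APG-NT` form a proper subset of the
morphisms of `APG`. -/
theorem apg_hom_not_natural (P : Type) (V : P → Type) :
    (¬ ∃ (hT : Ty P (APG.exOne P V).L → Ty P (APG.exZero P V).L)
        (hV : VSig P V (APG.exOne P V).L (APG.exOne P V).E (APG.exOne P V).lab →
              VSig P V (APG.exZero P V).L (APG.exZero P V).E (APG.exZero P V).lab),
        (∀ l, hT ((APG.exOne P V).sch l) = (APG.exZero P V).sch ((APG.exHom P V).fL l)) ∧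
        (∀ v, hT v.1 = (hV v).1)) ∧
    ∃ (G₁ G₂ : APG P V) (m : APG.Hom G₁ G₂),
      ¬ ∃ h : APG.NT G₁ G₂, h.fL = m.fL ∧ h.fE = m.fE := by
  refine ⟨APG.not_exists_natural_of_isEmpty_val (l := PUnit.unit) Val.unit Val.isEmpty_zero,
    APG.exOne P V, APG.exZero P V, APG.exHom P V, ?_⟩
  rintro ⟨h, -⟩
  have noNT : IsEmpty (APG.NT (APG.exOne P V) (APG.exZero P V)) :=
    APG.isEmpty_nt_of_isEmpty_val (l := PUnit.unit) Val.unit fun _ => Val.isEmpty_zero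
  exact noNT.false h
end

section
/- For each schema S, the category S-APG, whose objects are the APGs on S and whose morphisms are the σ-preserving and υ-natural APG morphisms, has binary coproducts and an initial object: the initial object is the APG on S with empty element set, and the coproduct of G₁ and G₂ on S is the APG on S with element set G₁(𝓔) + G₂(𝓔), labeling induced by G₁(λ) and G₂(λ), and values obtained by transporting G₁(υ) and G₂(υ) along the element injections. -/
/-- A schema: a set of labels together with a type for each label. -/
structure Schema (P : Type) : Type 1 where
  L : Type
  sch : L → Ty P L

/-- An APG on a schema `S`: an APG whose label set is `S.L` and whose schema
function is `S.sch`. -/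
structure APGOn (P : Type) (V : P → Type) (S : Schema P) : Type 1 where
  E : Type
  lab : E → S.L
  val : E → VSig P V S.L E lab
  coh : ∀ e, (val e).1 = S.sch (lab e)

/-- A `σ`-preserving APG morphism between APGs on a common schema `S`: the label
component is the identity, so only the element function remains, commuting with
the labelings. -/
@[ext]
structure APGOn.Hom {P : Type} {V : P → Type} {S : Schema P}
    (G₁ G₂ : APGOn P V S) : Type where
  fE : G₁.E → G₂.E
  nat : ∀ e, G₁.lab e = G₂.lab (fE e)

/-- The identity `σ`-preserving morphism. -/
def APGOn.Hom.idHom {P : Type} {V : P → Type} {S : Schema P} (G : APGOn P V S) :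
    APGOn.Hom G G :=
  ⟨fun e => e, fun _ => rfl⟩

/-- Componentwise composition of `σ`-preserving morphisms. -/
def APGOn.Hom.comp {P : Type} {V : P → Type} {S : Schema P} {G₁ G₂ G₃ : APGOn P V S}
    (f : APGOn.Hom G₁ G₂) (g : APGOn.Hom G₂ G₃) : APGOn.Hom G₁ G₃ :=
  ⟨g.fE ∘ f.fE, fun e => by simp only [Function.comp_apply]; rw [f.nat, g.nat]⟩

/-- `⋄^g_{id}`: transport of values along a label-compatible element function,
keeping labels (and hence types) fixed: it replaces each `Id e` by `Id (fE e)`,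
fixes `()` and `Prim d`, and commutes with `inl`, `inr` and pairing. -/
def Val.mapE {P : Type} {V : P → Type} {L E₁ E₂ : Type} {lab₁ : E₁ → L}
    {lab₂ : E₂ → L} (fE : E₁ → E₂) (hc : ∀ e, lab₁ e = lab₂ (fE e)) :
    {t : Ty P L} → Val P V L E₁ lab₁ t → Val P V L E₂ lab₂ t
  | _, .unit => .unit
  | _, .inl v => .inl (v.mapE fE hc)
  | _, .inr v => .inr (v.mapE fE hc)
  | _, .pair v₁ v₂ => .pair (v₁.mapE fE hc) (v₂.mapE fE hc)
  | _, .prim p d => .prim p d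
  | _, .id e =>
      cast (congrArg (fun x => Val P V L E₂ lab₂ (Ty.lbl x)) (hc e).symm)
        (Val.id (fE e))

/-- `⋄^g_{id}` on typed values (elements of `G(𝓥)`). -/
def VSig.mapE {P : Type} {V : P → Type} {L E₁ E₂ : Type} {lab₁ : E₁ → L}
    {lab₂ : E₂ → L} (fE : E₁ → E₂) (hc : ∀ e, lab₁ e = lab₂ (fE e))
    (v : VSig P V L E₁ lab₁) : VSig P V L E₂ lab₂ :=
  ⟨v.1, v.2.mapE fE hc⟩

variable {P : Type} {V : P → Type} {S : Schema P}

theorem Val.mapE_cast {P : Type} {V : P → Type} {L E₁ E₂ : Type} {lab₁ : E₁ → L}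
    {lab₂ : E₂ → L} (fE : E₁ → E₂) (hc : ∀ e, lab₁ e = lab₂ (fE e))
    {l l' : L} (h : l = l') (v : Val P V L E₁ lab₁ (Ty.lbl l)) :
    Val.mapE fE hc (cast (congrArg (fun x => Val P V L E₁ lab₁ (Ty.lbl x)) h) v) =
    cast (congrArg (fun x => Val P V L E₂ lab₂ (Ty.lbl x)) h) (Val.mapE fE hc v) := by
  subst h; rfl

theorem Val.mapE_mapE {P : Type} {V : P → Type} {L E₁ E₂ E₃ : Type}
    {lab₁ : E₁ → L} {lab₂ : E₂ → L} {lab₃ : E₃ → L}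
    (fE₁ : E₁ → E₂) (hc₁ : ∀ e, lab₁ e = lab₂ (fE₁ e))
    (fE₂ : E₂ → E₃) (hc₂ : ∀ e, lab₂ e = lab₃ (fE₂ e))
    {t : Ty P L} (v : Val P V L E₁ lab₁ t) :
    Val.mapE fE₂ hc₂ (Val.mapE fE₁ hc₁ v) =
      Val.mapE (fE₂ ∘ fE₁) (fun e => (hc₁ e).trans (hc₂ (fE₁ e))) v := by
  induction v with
  | unit => rfl
  | inl v ih => simp only [Val.mapE, ih]
  | inr v ih => simp only [Val.mapE, ih]
  | pair v₁ v₂ ih₁ ih₂ => simp only [Val.mapE, ih₁, ih₂]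
  | prim p d => rfl
  | id e =>
      show Val.mapE fE₂ hc₂
          (cast (congrArg (fun x => Val P V L E₂ lab₂ (Ty.lbl x)) (hc₁ e).symm)
            (Val.id (fE₁ e))) = _
      rw [Val.mapE_cast]
      show cast _ (Val.mapE fE₂ hc₂ (Val.id (fE₁ e))) = _
      rw [show Val.mapE fE₂ hc₂ (Val.id (fE₁ e)) =
            cast (congrArg (fun x => Val P V L E₃ lab₃ (Ty.lbl x)) (hc₂ (fE₁ e)).symm)
              (Val.id (fE₂ (fE₁ e))) from rfl, cast_cast]
      · rfl
      · exact (hc₁ e).symm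

theorem VSig.mapE_mapE {P : Type} {V : P → Type} {L E₁ E₂ E₃ : Type}
    {lab₁ : E₁ → L} {lab₂ : E₂ → L} {lab₃ : E₃ → L}
    (fE₁ : E₁ → E₂) (hc₁ : ∀ e, lab₁ e = lab₂ (fE₁ e))
    (fE₂ : E₂ → E₃) (hc₂ : ∀ e, lab₂ e = lab₃ (fE₂ e))
    (v : VSig P V L E₁ lab₁) :
    VSig.mapE fE₂ hc₂ (VSig.mapE fE₁ hc₁ v) =
      VSig.mapE (fE₂ ∘ fE₁) (fun e => (hc₁ e).trans (hc₂ (fE₁ e))) v := by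
  unfold VSig.mapE
  rw [Val.mapE_mapE]

theorem Val.mapE_id {P : Type} {V : P → Type} {L E : Type} {lab : E → L}
    {t : Ty P L} (v : Val P V L E lab t) :
    Val.mapE (fun e => e) (fun _ => rfl) v = v := by
  induction v with
  | unit => rfl
  | inl v ih => simp only [Val.mapE, ih]
  | inr v ih => simp only [Val.mapE, ih]
  | pair v₁ v₂ ih₁ ih₂ => simp only [Val.mapE, ih₁, ih₂]
  | prim p d => rfl
  | id e => rfl

/-- A morphism of `S`-APG: a `σ`-preserving (`h_𝓛 = id`) and `υ`-natural APG
morphism between APGs on the schema `S`: transporting values along the element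
function commutes with taking values. -/
structure APGOn.HomS {P : Type} {V : P → Type} {S : Schema P}
    (G₁ G₂ : APGOn P V S) : Type where
  fE : G₁.E → G₂.E
  nat : ∀ e, G₁.lab e = G₂.lab (fE e)
  nat_val : ∀ e, VSig.mapE fE nat (G₁.val e) = G₂.val (fE e)

/-- The identity `S`-APG morphism. -/
def APGOn.HomS.idHom (G : APGOn P V S) : APGOn.HomS G G :=
  ⟨fun e => e, fun _ => rfl, fun e => by
    show (⟨(G.val e).1, Val.mapE (fun e => e) (fun _ => rfl) (G.val e).2⟩ :
        VSig P V S.L G.E G.lab) = G.val e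
    rw [Val.mapE_id]
    rfl⟩

/-- Composition of `S`-APG morphisms. -/
def APGOn.HomS.comp {G₁ G₂ G₃ : APGOn P V S}
    (f : APGOn.HomS G₁ G₂) (g : APGOn.HomS G₂ G₃) : APGOn.HomS G₁ G₃ :=
  ⟨g.fE ∘ f.fE,
   fun e => by simp only [Function.comp_apply]; rw [f.nat, g.nat],
   fun e => by
     simp only [Function.comp_apply]
     rw [← g.nat_val (f.fE e), ← f.nat_val e]
     exact (VSig.mapE_mapE f.fE f.nat g.fE g.nat (G₁.val e)).symm⟩

/-- The initial object of `S`-APG: the APG on `S` with empty element set. -/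
def APGOn.initial (P : Type) (V : P → Type) (S : Schema P) : APGOn P V S where
  E := PEmpty
  lab := PEmpty.elim
  val := PEmpty.elim
  coh := fun e => e.elim

/-- The coproduct of two APGs on `S`: disjoint union of elements, induced
labeling, and values transported along the element injections. -/
def APGOn.coprod (G₁ G₂ : APGOn P V S) : APGOn P V S where
  E := G₁.E ⊕ G₂.E
  lab := Sum.elim G₁.lab G₂.lab
  val := fun e =>
    match e with
    | Sum.inl e =>
        VSig.mapE (lab₂ := Sum.elim G₁.lab G₂.lab) Sum.inl (fun _ => rfl) (G₁.val e)
    | Sum.inr e =>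
        VSig.mapE (lab₂ := Sum.elim G₁.lab G₂.lab) Sum.inr (fun _ => rfl) (G₂.val e)
  coh := fun e => by
    cases e with
    | inl e => exact G₁.coh e
    | inr e => exact G₂.coh e

/-- First injection `S`-APG morphism into the coproduct. -/
def APGOn.coprodInl (G₁ G₂ : APGOn P V S) : APGOn.HomS G₁ (APGOn.coprod G₁ G₂) :=
  ⟨Sum.inl, fun _ => rfl, fun _ => rfl⟩

/-- Second injection `S`-APG morphism into the coproduct. -/
def APGOn.coprodInr (G₁ G₂ : APGOn P V S) : APGOn.HomS G₂ (APGOn.coprod G₁ G₂) :=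
  ⟨Sum.inr, fun _ => rfl, fun _ => rfl⟩

attribute [ext] APGOn.HomS

namespace APGOn

/-- The morphism from the initial object of `S`-APG to `G`, given by the empty function. -/
def initialDesc (G : APGOn P V S) : HomS (initial P V S) G where
  fE := PEmpty.elim
  nat e := e.elim
  nat_val e := e.elim

theorem eq_initialDesc {G : APGOn P V S} (h : HomS (initial P V S) G) : h = initialDesc G :=
  HomS.ext (funext fun e => e.elim)

variable {G₁ G₂ G : APGOn P V S}

theorem lab_coprod_eq_lab_sumElim (p : HomS G₁ G) (q : HomS G₂ G) (e : (coprod G₁ G₂).E) :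
    (coprod G₁ G₂).lab e = G.lab (Sum.elim p.fE q.fE e) := by
  cases e with
  | inl e => exact p.nat e
  | inr e => exact q.nat e

/-- Transport of values is functorial, so transporting along an injection and then along the
copairing is transporting along `p` or `q`, which are `υ`-natural. -/
theorem mapE_sumElim_val_coprod (p : HomS G₁ G) (q : HomS G₂ G) (e : (coprod G₁ G₂).E) :
    VSig.mapE (Sum.elim p.fE q.fE) (lab_coprod_eq_lab_sumElim p q) ((coprod G₁ G₂).val e) =
      G.val (Sum.elim p.fE q.fE e) := by
  have hlab := lab_coprod_eq_lab_sumElim p q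
  cases e with
  | inl e =>
    calc
      _ = VSig.mapE p.fE p.nat (G₁.val e) := VSig.mapE_mapE Sum.inl _ _ hlab (G₁.val e)
      _ = G.val (p.fE e) := p.nat_val e
  | inr e =>
    calc
      _ = VSig.mapE q.fE q.nat (G₂.val e) := VSig.mapE_mapE Sum.inr _ _ hlab (G₂.val e)
      _ = G.val (q.fE e) := q.nat_val e

/-- The copairing of `p` and `q`: the morphism out of the coproduct given by case analysis on
elements. -/
def coprodDesc (p : HomS G₁ G) (q : HomS G₂ G) : HomS (coprod G₁ G₂) G where
  fE := Sum.elim p.fE q.fE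
  nat := lab_coprod_eq_lab_sumElim p q
  nat_val := mapE_sumElim_val_coprod p q

theorem coprodInl_comp_coprodDesc (p : HomS G₁ G) (q : HomS G₂ G) :
    (coprodInl G₁ G₂).comp (coprodDesc p q) = p :=
  rfl

theorem coprodInr_comp_coprodDesc (p : HomS G₁ G) (q : HomS G₂ G) :
    (coprodInr G₁ G₂).comp (coprodDesc p q) = q :=
  rfl

theorem coprod_hom_ext {m m' : HomS (coprod G₁ G₂) G}
    (hl : (coprodInl G₁ G₂).comp m = (coprodInl G₁ G₂).comp m')
    (hr : (coprodInr G₁ G₂).comp m = (coprodInr G₁ G₂).comp m') : m = m' := by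
  ext e
  cases e with
  | inl e => exact congrFun (congrArg HomS.fE hl) e
  | inr e => exact congrFun (congrArg HomS.fE hr) e

theorem eq_coprodDesc {p : HomS G₁ G} {q : HomS G₂ G} {m : HomS (coprod G₁ G₂) G}
    (hl : (coprodInl G₁ G₂).comp m = p) (hr : (coprodInr G₁ G₂).comp m = q) :
    m = coprodDesc p q :=
  coprod_hom_ext (hl.trans (coprodInl_comp_coprodDesc p q).symm)
    (hr.trans (coprodInr_comp_coprodDesc p q).symm)

end APGOn

/-- For each schema `S`, the category `S`-APG (APGs on `S`,
with `σ`-preserving `υ`-natural morphisms) has an initial object — the APG on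
`S` with empty element set — and binary coproducts — given by disjoint union of
elements with induced labeling and transported values. -/
theorem apgOnS_initial_and_coproducts (P : Type) (V : P → Type) (S : Schema P) :
    (∀ G : APGOn P V S, ∃ h : APGOn.HomS (APGOn.initial P V S) G,
        ∀ h' : APGOn.HomS (APGOn.initial P V S) G, h' = h) ∧
    (∀ (G₁ G₂ G : APGOn P V S) (p : APGOn.HomS G₁ G) (q : APGOn.HomS G₂ G),
        ∃ m : APGOn.HomS (APGOn.coprod G₁ G₂) G,
          ((APGOn.coprodInl G₁ G₂).comp m = p ∧ (APGOn.coprodInr G₁ G₂).comp m = q) ∧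
          ∀ m' : APGOn.HomS (APGOn.coprod G₁ G₂) G,
            ((APGOn.coprodInl G₁ G₂).comp m' = p ∧ (APGOn.coprodInr G₁ G₂).comp m' = q) →
            m' = m) := by
  refine ⟨fun G => ⟨APGOn.initialDesc G, APGOn.eq_initialDesc⟩, fun G₁ G₂ G p q => ?_⟩
  exact ⟨APGOn.coprodDesc p q,
    ⟨APGOn.coprodInl_comp_coprodDesc p q, APGOn.coprodInr_comp_coprodDesc p q⟩,
    fun m' ⟨hl, hr⟩ => APGOn.eq_coprodDesc hl hr⟩
end

section
/- Well-definedness of the coproduct APG: for all APGs G₁ and G₂, the structure G₁ + G₂ defined by taking disjoint unions of labels and of elements, transporting the schemas along the label injections (σ(inl l) := ⋄_{inl}(G₁(σ)(l)), σ(inr l) := ⋄_{inr}(G₂(σ)(l))), and transporting the values along the label and element injections (υ(inl e) := ⋄^{inl}_{inl}(G₁(υ)(e)), υ(inr e) := ⋄^{inr}_{inr}(G₂(υ)(e))), satisfies the APG coherence equation (G₁ + G₂)(τ) ∘ (G₁ + G₂)(υ) = (G₁ + G₂)(σ) ∘ (G₁ + G₂)(λ), and is therefore an APG. -/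
variable {P : Type} {V : P → Type}

/-- Labeling function of the coproduct data: disjoint union of labelings. -/
def coprodLab (G₁ G₂ : APG P V) : G₁.E ⊕ G₂.E → G₁.L ⊕ G₂.L :=
  Sum.map G₁.lab G₂.lab

/-- Schema function of the coproduct data: schemas transported along the label
injections. -/
def coprodSch (G₁ G₂ : APG P V) : G₁.L ⊕ G₂.L → Ty P (G₁.L ⊕ G₂.L) :=
  Sum.elim (fun l => (G₁.sch l).transport fun a => Ty.lbl (Sum.inl a))
           (fun l => (G₂.sch l).transport fun b => Ty.lbl (Sum.inr b))

/-- Value function of the coproduct data: values transported along the label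
and element injections. -/
def coprodVal (G₁ G₂ : APG P V) :
    G₁.E ⊕ G₂.E → VSig P V (G₁.L ⊕ G₂.L) (G₁.E ⊕ G₂.E) (coprodLab G₁ G₂) :=
  fun e =>
    match e with
    | Sum.inl e =>
        VSig.transport (lab₁ := G₁.lab) (lab₂ := coprodLab G₁ G₂)
          (fun a => Ty.lbl (Sum.inl a)) (fun a => Val.id (Sum.inl a)) (G₁.val e)
    | Sum.inr e =>
        VSig.transport (lab₁ := G₂.lab) (lab₂ := coprodLab G₁ G₂)
          (fun b => Ty.lbl (Sum.inr b)) (fun b => Val.id (Sum.inr b)) (G₂.val e)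

namespace APG

-- Since values carry their types, `τ ∘ ⋄^g_f = ⋄_f ∘ τ` holds definitionally.
theorem fst_transport_val (G : APG P V) {L E : Type} {lab : E → L} (f : G.L → Ty P L)
    (g : (e : G.E) → Val P V L E lab (f (G.lab e))) (e : G.E) :
    ((G.val e).transport f g).1 = (G.sch (G.lab e)).transport f :=
  congrArg (Ty.transport f) (G.coh e)

theorem fst_coprodVal (G₁ G₂ : APG P V) :
    ∀ e : G₁.E ⊕ G₂.E, (coprodVal G₁ G₂ e).1 = coprodSch G₁ G₂ (coprodLab G₁ G₂ e)
  | .inl e => G₁.fst_transport_val _ _ e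
  | .inr e => G₂.fst_transport_val _ _ e

/-- The coproduct APG `G₁ + G₂`, bundling the coproduct data with its coherence equation. -/
def coprod_s15 (G₁ G₂ : APG P V) : APG P V where
  L := G₁.L ⊕ G₂.L
  E := G₁.E ⊕ G₂.E
  lab := coprodLab G₁ G₂
  sch := coprodSch G₁ G₂
  val := coprodVal G₁ G₂
  coh := fst_coprodVal G₁ G₂

end APG

/-- Well-definedness of the coproduct APG: the coproduct data
`G₁ + G₂` satisfies the APG coherence equation `τ ∘ υ = σ ∘ λ` — the type of
the (transported) value of each element equals the (transported) schema of its
label — and is therefore an APG. -/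
theorem coprod_coherence (P : Type) (V : P → Type) (G₁ G₂ : APG P V) :
    (∀ e : G₁.E ⊕ G₂.E,
      (coprodVal G₁ G₂ e).1 = coprodSch G₁ G₂ (coprodLab G₁ G₂ e)) ∧
    ∃ H : APG P V, ∃ (_ : H.L = (G₁.L ⊕ G₂.L)) (_ : H.E = (G₁.E ⊕ G₂.E)),
      HEq H.lab (coprodLab G₁ G₂) ∧ HEq H.sch (coprodSch G₁ G₂) ∧
      HEq H.val (coprodVal G₁ G₂) :=
  ⟨APG.fst_coprodVal G₁ G₂, G₁.coprod_s15 G₂, rfl, rfl, HEq.rfl, HEq.rfl, HEq.rfl⟩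
end
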